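/- Let H = F(a,b) be the free group on two generators with generating set T = {b} ∪ {aᵏ : k ∈ ℤ, k ≠ 0}, let G be the group with presentation ⟨a,b,t ∣ t a t⁻¹ = b, t² = e⟩ with generating set S consisting of the images of the elements of T together with t, and let φ : H → G be the canonical homomorphism sending a ↦ a and b ↦ b. Then φ, viewed as a map from (H, dist_{(H,T)}) to (G, dist_{(G,S)}), is not a quasi-isometric embedding: there exist no constants L ≥ 1 and C ≥ 0 such that dist_{(H,T)}(h,h′) ≤ L · dist_{(G,S)}(φ(h),φ(h′)) + C for all h, h′ ∈ H. In particular φ is not a quasi-isometry. -/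

import Mathlib

open Pointwise

/-- The word metric on a group `G` with respect to a (possibly infinite) generating set
`S`: `wordDist S g h` is the least `m` such that `g⁻¹ * h` is a product of `m` elements
of `S ∪ S⁻¹`. -/
noncomputable def wordDist {G : Type*} [Group G] (S : Set G) (g h : G) : ℝ :=
  (sInf {n : ℕ | g⁻¹ * h ∈ (S ∪ S⁻¹) ^ n} : ℕ)

/-- The generators `a`, `b`, `t` of the group `G = ⟨a, b, t ∣ t a t⁻¹ = b, t² = e⟩`. -/
inductive GGen : Type
  | a : GGen
  | b : GGen
  | t : GGen

/-- The relators `t a t⁻¹ b⁻¹` and `t²` of `G = ⟨a, b, t ∣ t a t⁻¹ = b, t² = e⟩`. -/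
def gRels : Set (FreeGroup GGen) :=
  {FreeGroup.of GGen.t * FreeGroup.of GGen.a * (FreeGroup.of GGen.t)⁻¹ *
      (FreeGroup.of GGen.b)⁻¹,
    FreeGroup.of GGen.t * FreeGroup.of GGen.t}

/-- The group `G = ⟨a, b, t ∣ t a t⁻¹ = b, t² = e⟩`. -/
abbrev Gp : Type := PresentedGroup gRels

/-- The generating set `S` of `G` consisting of the images of the elements of
`T = {b} ∪ {aᵏ : k ≠ 0}` together with `t`. -/
def Sset : Set Gp :=
  {PresentedGroup.of GGen.b, PresentedGroup.of GGen.t} ∪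
    {x | ∃ k : ℤ, k ≠ 0 ∧ x = PresentedGroup.of (rels := gRels) GGen.a ^ k}

/-- The generators `a`, `b` of the free group `F(a,b)`. -/
inductive Gen : Type
  | a : Gen
  | b : Gen

/-- The infinite generating set `T = {b} ∪ {aᵏ : k ∈ ℤ, k ≠ 0}` of the free group
`F(a,b)`. -/
def Tset : Set (FreeGroup Gen) :=
  {FreeGroup.of Gen.b} ∪ {x | ∃ k : ℤ, k ≠ 0 ∧ x = FreeGroup.of Gen.a ^ k}

/-- The canonical homomorphism `φ : H = F(a,b) → G = ⟨a, b, t ∣ t a t⁻¹ = b, t² = e⟩`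
sending `a ↦ a` and `b ↦ b`. -/
noncomputable def phi : FreeGroup Gen →* Gp :=
  FreeGroup.lift fun g =>
    match g with
    | Gen.a => PresentedGroup.of GGen.a
    | Gen.b => PresentedGroup.of GGen.b

/-! The powers `bⁿ` lie at distance `n` from the identity in `H`, because the exponent sum of `b`
changes by at most one along every edge of the Cayley graph of `T`. In `G` they stay within distance
three of the identity, because `bⁿ = t aⁿ t⁻¹` and `aⁿ` is a single generator. -/

section WordDist

variable {G : Type*} [Group G] {S : Set G}

lemma wordDist_le_of_mem_pow {g h : G} {n : ℕ} (hmem : g⁻¹ * h ∈ (S ∪ S⁻¹) ^ n) :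
    wordDist S g h ≤ n :=
  Nat.cast_le.2 (Nat.sInf_le hmem)

lemma exists_mem_pow_of_mem_closure {x : G} (hx : x ∈ Subgroup.closure S) :
    ∃ n : ℕ, x ∈ (S ∪ S⁻¹) ^ n := by
  rw [← Subgroup.mem_toSubmonoid, Subgroup.closure_toSubmonoid] at hx
  induction hx using Submonoid.closure_induction with
  | mem x hx => exact ⟨1, by rwa [pow_one]⟩
  | one => exact ⟨0, by rw [pow_zero, Set.mem_one]⟩
  | mul x y _ _ ihx ihy =>
    obtain ⟨m, hm⟩ := ihx
    obtain ⟨n, hn⟩ := ihy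
    exact ⟨m + n, by rw [pow_add]; exact Set.mul_mem_mul hm hn⟩

lemma exists_mem_pow_eq_wordDist {g h : G} (hgh : g⁻¹ * h ∈ Subgroup.closure S) :
    ∃ n : ℕ, g⁻¹ * h ∈ (S ∪ S⁻¹) ^ n ∧ wordDist S g h = n :=
  ⟨_, Nat.sInf_mem (exists_mem_pow_of_mem_closure hgh), rfl⟩

lemma groupSeminorm_le_mul_of_mem_pow (p : GroupSeminorm G) {K : ℝ} (hS : ∀ s ∈ S, p s ≤ K)
    {x : G} {n : ℕ} (hx : x ∈ (S ∪ S⁻¹) ^ n) : p x ≤ K * n := by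
  have le_of_mem_union : ∀ s ∈ S ∪ S⁻¹, p s ≤ K := by
    rintro s (hs | hs)
    · exact hS s hs
    · simpa only [map_inv_eq_map] using hS s⁻¹ hs
  induction n generalizing x with
  | zero =>
    rw [pow_zero, Set.mem_one] at hx
    simp [hx]
  | succ n ih =>
    rw [pow_succ] at hx
    obtain ⟨y, hy, s, hs, rfl⟩ := Set.mem_mul.1 hx
    calc
      p (y * s) ≤ p y + p s := map_mul_le_add p y s
      _ ≤ K * n + K := add_le_add (ih hy) (le_of_mem_union s hs)
      _ = K * (n + 1 : ℕ) := by push_cast; ring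

lemma groupSeminorm_le_mul_wordDist (p : GroupSeminorm G) {K : ℝ} (hS : ∀ s ∈ S, p s ≤ K)
    {g h : G} (hgh : g⁻¹ * h ∈ Subgroup.closure S) : p (g⁻¹ * h) ≤ K * wordDist S g h := by
  obtain ⟨n, hmem, hdist⟩ := exists_mem_pow_eq_wordDist hgh
  rw [hdist]
  exact groupSeminorm_le_mul_of_mem_pow p hS hmem

lemma wordDist_one_pow_le {x : G} (hx : x ∈ S) (n : ℕ) : wordDist S 1 (x ^ n) ≤ n := by
  have hmem : x ^ n ∈ (S ∪ S⁻¹) ^ n := Set.pow_mem_pow (Or.inl hx)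
  exact wordDist_le_of_mem_pow (by rwa [inv_one, one_mul])

lemma wordDist_one_conj_le {t x : G} (ht : t ∈ S) (hx : x ∈ S) :
    wordDist S 1 (t * x * t⁻¹) ≤ 3 := by
  have hmem : t * x * t⁻¹ ∈ (S ∪ S⁻¹) ^ 3 := by
    rw [pow_succ, pow_two]
    exact Set.mul_mem_mul (Set.mul_mem_mul (Or.inl ht) (Or.inl hx))
      (Or.inr (Set.inv_mem_inv.2 ht))
  exact_mod_cast wordDist_le_of_mem_pow (g := 1) (by rwa [inv_one, one_mul])

end WordDist

/-- The exponent sum of `b`, as a homomorphism to the infinite cyclic group; its absolute value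
bounds word lengths with respect to `T` from below. -/
def bExponent : FreeGroup Gen →* Multiplicative ℤ :=
  FreeGroup.lift fun
    | Gen.a => 1
    | Gen.b => Multiplicative.ofAdd 1

lemma norm_bExponent_le_one {s : FreeGroup Gen} (hs : s ∈ Tset) : ‖bExponent s‖ ≤ 1 := by
  rcases hs with rfl | ⟨k, -, rfl⟩ <;> simp [bExponent]

lemma norm_bExponent_of_b_pow (n : ℕ) : ‖bExponent (FreeGroup.of Gen.b ^ n)‖ = n := by
  simp [bExponent, ← ofAdd_nsmul]

lemma of_b_mem_Tset : FreeGroup.of Gen.b ∈ Tset := Or.inl rfl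

lemma wordDist_Tset_one_of_b_pow (n : ℕ) : wordDist Tset 1 (FreeGroup.of Gen.b ^ n) = n := by
  refine le_antisymm (wordDist_one_pow_le of_b_mem_Tset n) ?_
  have hmem : 1⁻¹ * FreeGroup.of Gen.b ^ n ∈ Subgroup.closure Tset := by
    rw [inv_one, one_mul]
    exact pow_mem (Subgroup.subset_closure of_b_mem_Tset) n
  have hle := groupSeminorm_le_mul_wordDist
    ((normGroupSeminorm (Multiplicative ℤ)).comp bExponent) (fun _ ↦ norm_bExponent_le_one) hmem
  rwa [inv_one, one_mul, one_mul, GroupSeminorm.comp_apply, coe_normGroupSeminorm,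
    norm_bExponent_of_b_pow] at hle

lemma conj_of_t_of_a :
    (PresentedGroup.of GGen.t * PresentedGroup.of GGen.a * (PresentedGroup.of GGen.t)⁻¹ : Gp) =
      PresentedGroup.of GGen.b :=
  PresentedGroup.mk_eq_mk_of_mul_inv_mem (Or.inl rfl)

lemma phi_of_b_pow (n : ℕ) :
    phi (FreeGroup.of Gen.b ^ n) =
      PresentedGroup.of GGen.t * PresentedGroup.of GGen.a ^ n * (PresentedGroup.of GGen.t)⁻¹ := by
  rw [← conj_pow, conj_of_t_of_a, map_pow, phi, FreeGroup.lift_apply_of]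

lemma wordDist_Sset_one_phi_of_b_pow_le {n : ℕ} (hn : n ≠ 0) :
    wordDist Sset 1 (phi (FreeGroup.of Gen.b ^ n)) ≤ 3 := by
  have ht : PresentedGroup.of GGen.t ∈ Sset := Or.inl (Or.inr rfl)
  have ha : PresentedGroup.of GGen.a ^ n ∈ Sset :=
    Or.inr ⟨n, Nat.cast_ne_zero.2 hn, (zpow_natCast _ n).symm⟩
  rw [phi_of_b_pow]
  exact wordDist_one_conj_le ht ha

lemma not_forall_wordDist_Tset_le {L : ℝ} (hL : 0 ≤ L) (C : ℝ) :
    ¬ ∀ h h' : FreeGroup Gen,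
      wordDist Tset h h' ≤ L * wordDist Sset (phi h) (phi h') + C := by
  intro hle
  obtain ⟨n, hn⟩ := exists_nat_gt (L * 3 + C)
  have hsucc : ((n + 1 : ℕ) : ℝ) ≤ L * 3 + C := calc
    ((n + 1 : ℕ) : ℝ) = wordDist Tset 1 (FreeGroup.of Gen.b ^ (n + 1)) :=
      (wordDist_Tset_one_of_b_pow (n + 1)).symm
    _ ≤ L * wordDist Sset 1 (phi (FreeGroup.of Gen.b ^ (n + 1))) + C := by
      simpa only [map_one] using hle 1 (FreeGroup.of Gen.b ^ (n + 1))
    _ ≤ L * 3 + C := by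
      gcongr
      exact wordDist_Sset_one_phi_of_b_pow_le n.succ_ne_zero
  push_cast at hsucc
  linarith

/-- The canonical homomorphism `φ : (H, dist_T) → (G, dist_S)` is not
a quasi-isometric embedding: there are no `L ≥ 1`, `C ≥ 0` with
`dist_T(h,h') ≤ L · dist_S(φ h, φ h') + C` for all `h, h'`.  In particular `φ` is not
a quasi-isometry. -/
theorem statement9 :
    (¬ ∃ L C : ℝ, 1 ≤ L ∧ 0 ≤ C ∧
        ∀ h h' : FreeGroup Gen,
          wordDist Tset h h' ≤ L * wordDist Sset (phi h) (phi h') + C) ∧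
      ¬ ∃ L C : ℝ, 1 ≤ L ∧ 0 ≤ C ∧
          (∀ h h' : FreeGroup Gen,
            L⁻¹ * wordDist Tset h h' - C ≤ wordDist Sset (phi h) (phi h') ∧
              wordDist Sset (phi h) (phi h') ≤ L * wordDist Tset h h' + C) ∧
          ∀ y : Gp, ∃ h : FreeGroup Gen, wordDist Sset y (phi h) ≤ C := by
  constructor
  · rintro ⟨L, C, hL, -, hle⟩
    exact not_forall_wordDist_Tset_le (zero_le_one.trans hL) C hle
  · rintro ⟨L, C, hL, -, hqi, -⟩
    have hL_pos : 0 < L := zero_lt_one.trans_le hL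
    refine not_forall_wordDist_Tset_le hL_pos.le (L * C) fun h h' ↦ ?_
    have hlower : L⁻¹ * wordDist Tset h h' ≤ wordDist Sset (phi h) (phi h') + C :=
      sub_le_iff_le_add.1 (hqi h h').1
    rwa [inv_mul_le_iff₀ hL_pos, mul_add] at hlower
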